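/- Let d ≥ 1, μ ∈ ℝ, T > 0. Let b, R : (0,T) × ℝ^d → ℝ and u, U, h : (0,T) × ℝ^d → ℝ^d be smooth, with b(t,·) and U(t,·) compactly supported in x, uniformly for t in compact subintervals of (0,T), and suppose pointwise ∂_t b + div(b u) + div U = R and ∂_t U + (u·∇)U + 𝒜U + ∇b = h. Then for every t ∈ (0,T), (1/2) d/dt ∫_{ℝ^d} (b² + |U|²) dx + μ ∫ |∇U|² dx + (1−μ) ∫ (div U)² dx = (1/2) ∫ (|U|² − b²) div u dx + ∫ (R b + h·U) dx. -/

import Mathlib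

/-!
Differentiating `b² + |U|²` in time and inserting the two equations gives, at each point,

`b ∂ₜb + U·∂ₜU = ½(|U|² - b²) div u + R b + h·U - μ|∇U|² - (1-μ)(div U)² + div W`,

where `W = -½b²u - bU - ½|U|²u + μ ∑ⱼ Uⱼ∇Uⱼ + (1-μ)(div U)U` is the energy flux
(`energyFlux`, `pd_energyFlux`, `energy_algebra`). The flux is smooth and compactly supported in
`x`, so `div W` integrates to zero (`integral_pd_eq_zero`). Differentiation under the integral sign
(`hasDerivAt_integral_of_uniform_support`) is justified by the support being contained in one
compact set for all times near `t`, on which the time derivative is bounded.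
-/

open Real Set MeasureTheory Function

noncomputable section

variable {d : ℕ}

/-- Partial derivative in direction `i` of a scalar function on `ℝ^d`. -/
def pd (f : (Fin d → ℝ) → ℝ) (i : Fin d) (x : Fin d → ℝ) : ℝ :=
  fderiv ℝ f x (Pi.single i 1)

/-- Divergence of a vector field on `ℝ^d`. -/
def dvg (u : (Fin d → ℝ) → (Fin d → ℝ)) (x : Fin d → ℝ) : ℝ :=
  ∑ i, pd (fun y => u y i) i x

/-- Laplacian of a scalar function on `ℝ^d`. -/
def lap (f : (Fin d → ℝ) → ℝ) (x : Fin d → ℝ) : ℝ :=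
  ∑ i, pd (pd f i) i x

/-- Constant-coefficient Lamé operator `𝒜 U = -μ Δ U - (1-μ) ∇ (div U)`,
acting componentwise. -/
def lame (μ : ℝ) (u : (Fin d → ℝ) → (Fin d → ℝ)) (x : Fin d → ℝ) (j : Fin d) : ℝ :=
  -μ * lap (fun y => u y j) x - (1 - μ) * pd (dvg u) j x

lemma pd_eq_zero_off {f : (Fin d → ℝ) → ℝ} {K : Set (Fin d → ℝ)} (hK : IsCompact K)
    (hf : ∀ x, x ∉ K → f x = 0) (i : Fin d) : ∀ x, x ∉ K → pd f i x = 0 := by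
  intro x hx
  have h : f =ᶠ[nhds x] fun _ => (0 : ℝ) := by
    filter_upwards [hK.isClosed.isOpen_compl.mem_nhds hx] with y hy using hf y hy
  simp [pd, h.fderiv_eq]

lemma contDiff_pd {f : (Fin d → ℝ) → ℝ} (hf : ContDiff ℝ (⊤ : ℕ∞) f) (i : Fin d) :
    ContDiff ℝ (⊤ : ℕ∞) (pd f i) := by
  unfold pd
  exact (hf.fderiv_right (m := (⊤ : ℕ∞)) (by simp)).clm_apply contDiff_const

lemma contDiff_dvg {v : (Fin d → ℝ) → (Fin d → ℝ)}
    (hv : ∀ j, ContDiff ℝ (⊤ : ℕ∞) (fun y => v y j)) : ContDiff ℝ (⊤ : ℕ∞) (dvg v) := by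
  unfold dvg
  exact ContDiff.sum fun i _ => contDiff_pd (hv i) i

lemma integrable_of_eq_zero_off {f : (Fin d → ℝ) → ℝ} {K : Set (Fin d → ℝ)} (hK : IsCompact K)
    (hc : Continuous f) (hf : ∀ x, x ∉ K → f x = 0) : Integrable f :=
  hc.integrable_of_hasCompactSupport (HasCompactSupport.intro hK hf)

/-- A partial derivative of a compactly supported smooth function has zero integral: integration by
parts against the constant function `1`. -/
lemma integral_pd_eq_zero {f : (Fin d → ℝ) → ℝ} {K : Set (Fin d → ℝ)} (hK : IsCompact K)
    (hc : ContDiff ℝ (⊤ : ℕ∞) f) (hf : ∀ x, x ∉ K → f x = 0) (i : Fin d) :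
    ∫ x, pd f i x = 0 := by
  have hpd : Integrable fun x => fderiv ℝ f x (Pi.single i 1) :=
    integrable_of_eq_zero_off hK (contDiff_pd hc i).continuous (pd_eq_zero_off hK hf i)
  have h := integral_mul_fderiv_eq_neg_fderiv_mul_of_integrable (𝕜 := ℝ)
    (μ := (volume : Measure (Fin d → ℝ))) (f := fun _ => (1 : ℝ)) (g := f)
    (v := (Pi.single i 1 : Fin d → ℝ)) (by simp)
    (by simpa using hpd)
    (by simpa using integrable_of_eq_zero_off hK hc.continuous hf)
    (fun x _ => by fun_prop) (fun x _ => hc.contDiffAt.differentiableAt (by simp))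
  simpa [pd] using h

lemma hasDerivAt_slice {F : ℝ → (Fin d → ℝ) → ℝ} {T : ℝ}
    (hF : ContDiffOn ℝ (⊤ : ℕ∞) (uncurry F) (Ioo (0:ℝ) T ×ˢ (univ : Set (Fin d → ℝ))))
    {s : ℝ} (hs : s ∈ Ioo (0:ℝ) T) (x : Fin d → ℝ) :
    HasDerivAt (fun r => F r x) (fderiv ℝ (uncurry F) (s, x) (1, 0)) s := by
  have h1 : DifferentiableAt ℝ (uncurry F) (s, x) :=
    (hF.contDiffAt ((isOpen_Ioo.prod isOpen_univ).mem_nhds ⟨hs, mem_univ x⟩)).differentiableAt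
      (by simp)
  exact h1.hasFDerivAt.comp_hasDerivAt s ((hasDerivAt_id s).prodMk (hasDerivAt_const s x))

lemma contDiff_slice {E : Type*} [NormedAddCommGroup E] [NormedSpace ℝ E]
    {F : ℝ → (Fin d → ℝ) → E} {T : ℝ}
    (hF : ContDiffOn ℝ (⊤ : ℕ∞) (uncurry F) (Ioo (0:ℝ) T ×ˢ (univ : Set (Fin d → ℝ))))
    {t : ℝ} (ht : t ∈ Ioo (0:ℝ) T) : ContDiff ℝ (⊤ : ℕ∞) (F t) := by
  rw [← contDiffOn_univ]
  exact hF.comp (f := fun x : Fin d → ℝ => (t, x)) (by fun_prop) (fun x _ => ⟨ht, mem_univ x⟩)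

lemma hasDerivAt_integral_of_uniform_support {F : ℝ → (Fin d → ℝ) → ℝ} {T : ℝ}
    (hF : ContDiffOn ℝ (⊤ : ℕ∞) (uncurry F) (Ioo (0:ℝ) T ×ˢ (univ : Set (Fin d → ℝ))))
    {t t₁ t₂ : ℝ} (h0 : 0 < t₁) (h1 : t₁ < t) (h2 : t < t₂) (h3 : t₂ < T)
    {K : Set (Fin d → ℝ)} (hK : IsCompact K)
    (hz : ∀ s ∈ Icc t₁ t₂, ∀ x, x ∉ K → F s x = 0) :
    HasDerivAt (fun s => ∫ x, F s x) (∫ x, deriv (fun s => F s x) t) t := by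
  have hsub : ∀ s ∈ Icc t₁ t₂, s ∈ Ioo (0:ℝ) T := fun s hs => ⟨h0.trans_le hs.1, hs.2.trans_lt h3⟩
  have htt : t ∈ Icc t₁ t₂ := ⟨h1.le, h2.le⟩
  have hcont : ContinuousOn (fun p : ℝ × (Fin d → ℝ) => fderiv ℝ (uncurry F) p (1, 0))
      (Ioo (0:ℝ) T ×ˢ univ) :=
    (hF.continuousOn_fderiv_of_isOpen (isOpen_Ioo.prod isOpen_univ) (by simp)).clm_apply
      continuousOn_const
  obtain ⟨C, hC⟩ := (isCompact_Icc.prod hK).exists_bound_of_continuousOn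
    (hcont.mono (fun p hp => ⟨hsub p.1 hp.1, mem_univ _⟩) : ContinuousOn _ (Icc t₁ t₂ ×ˢ K))
  have hval : ∀ s ∈ Icc t₁ t₂, ∀ x,
      deriv (fun r => F r x) s = fderiv ℝ (uncurry F) (s, x) (1, 0) :=
    fun s hs x => (hasDerivAt_slice hF (hsub s hs) x).deriv
  refine (hasDerivAt_integral_of_dominated_loc_of_deriv_le (s := Ioo t₁ t₂)
    (bound := K.indicator fun _ => C) (F' := fun s x => deriv (fun r => F r x) s)
    (Ioo_mem_nhds h1 h2) ?_ ?_ ?_ ?_ ?_ ?_).2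
  · filter_upwards [Ioo_mem_nhds h1 h2] with s hs
    exact (contDiff_slice hF (hsub s ⟨hs.1.le, hs.2.le⟩)).continuous.aestronglyMeasurable
  · exact integrable_of_eq_zero_off hK (contDiff_slice hF (hsub t htt)).continuous (hz t htt)
  · refine Continuous.aestronglyMeasurable ?_
    simp_rw [hval t htt]
    rw [← continuousOn_univ]
    exact hcont.comp (f := fun x : Fin d → ℝ => (t, x)) (by fun_prop)
      (fun x _ => ⟨hsub t htt, mem_univ x⟩)
  · refine Filter.Eventually.of_forall fun x s hs => ?_
    have hs' : s ∈ Icc t₁ t₂ := ⟨hs.1.le, hs.2.le⟩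
    by_cases hx : x ∈ K
    · rw [indicator_of_mem hx, hval s hs' x]
      exact hC (s, x) ⟨hs', hx⟩
    · have he : (fun r => F r x) =ᶠ[nhds s] fun _ => (0 : ℝ) := by
        filter_upwards [Ioo_mem_nhds hs.1 hs.2] with r hr using hz r ⟨hr.1.le, hr.2.le⟩ x hx
      rw [indicator_of_notMem hx, he.deriv_eq]
      simp
  · exact (integrable_indicator_iff hK.measurableSet).2
      (integrableOn_const (hK.measure_lt_top.ne))
  · refine Filter.Eventually.of_forall fun x s hs => ?_
    have hs' : s ∈ Icc t₁ t₂ := ⟨hs.1.le, hs.2.le⟩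
    rw [hval s hs' x]
    exact hasDerivAt_slice hF (hsub s hs') x

lemma pd_mul {f g : (Fin d → ℝ) → ℝ} {x : Fin d → ℝ} (hf : DifferentiableAt ℝ f x)
    (hg : DifferentiableAt ℝ g x) (i : Fin d) :
    pd (fun y => f y * g y) i x = f x * pd g i x + pd f i x * g x := by
  simp only [pd]
  rw [fderiv_fun_mul hf hg]
  simp [mul_comm]

lemma pd_add {f g : (Fin d → ℝ) → ℝ} {x : Fin d → ℝ} (hf : DifferentiableAt ℝ f x)
    (hg : DifferentiableAt ℝ g x) (i : Fin d) :
    pd (fun y => f y + g y) i x = pd f i x + pd g i x := by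
  simp only [pd]
  rw [fderiv_fun_add hf hg]
  simp

lemma pd_const_mul {f : (Fin d → ℝ) → ℝ} {x : Fin d → ℝ} (hf : DifferentiableAt ℝ f x)
    (c : ℝ) (i : Fin d) : pd (fun y => c * f y) i x = c * pd f i x := by
  simp only [pd]
  rw [fderiv_const_mul hf]
  simp

lemma pd_sum {f : Fin d → (Fin d → ℝ) → ℝ} {x : Fin d → ℝ}
    (hf : ∀ j, DifferentiableAt ℝ (f j) x) (i : Fin d) :
    pd (fun y => ∑ j, f j y) i x = ∑ j, pd (f j) i x := by
  simp only [pd]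
  rw [fderiv_fun_sum fun j _ => hf j]
  simp

/-- The `i`-th component of the energy flux
`-½(b² + |V|²)v - bV + μ ∑ⱼ Vⱼ∇Vⱼ + (1-μ)(div V)V` at a fixed time, with transport velocity `v`
and perturbation `(b, V)`. -/
def energyFlux (μ : ℝ) (b : (Fin d → ℝ) → ℝ) (v V : (Fin d → ℝ) → (Fin d → ℝ)) (i : Fin d)
    (x : Fin d → ℝ) : ℝ :=
  (-1/2) * ((b x * b x + ∑ j, V x j * V x j) * v x i) + (-1) * (b x * V x i)
    + μ * (∑ j, V x j * pd (fun y => V y j) i x) + (1 - μ) * (V x i * dvg V x)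

lemma contDiff_energyFlux (μ : ℝ) {b : (Fin d → ℝ) → ℝ} {v V : (Fin d → ℝ) → (Fin d → ℝ)}
    (hb : ContDiff ℝ (⊤ : ℕ∞) b) (hv : ∀ j, ContDiff ℝ (⊤ : ℕ∞) (fun y => v y j))
    (hV : ∀ j, ContDiff ℝ (⊤ : ℕ∞) (fun y => V y j)) (i : Fin d) :
    ContDiff ℝ (⊤ : ℕ∞) (energyFlux μ b v V i) := by
  unfold energyFlux
  have h1 := fun j => contDiff_pd (hV j) i
  have h2 := contDiff_dvg hV
  have h3 := hv i
  have h4 := hV i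
  have h5 : ContDiff ℝ (⊤ : ℕ∞) fun x => ∑ j, V x j * V x j :=
    ContDiff.sum fun j _ => (hV j).mul (hV j)
  have h6 : ContDiff ℝ (⊤ : ℕ∞) fun x => ∑ j, V x j * pd (fun y => V y j) i x :=
    ContDiff.sum fun j _ => (hV j).mul (h1 j)
  exact (((contDiff_const.mul (((hb.mul hb).add h5).mul h3)).add
    (contDiff_const.mul (hb.mul h4))).add (contDiff_const.mul h6)).add
    (contDiff_const.mul (h4.mul h2))

lemma pd_energyFlux (μ : ℝ) {b : (Fin d → ℝ) → ℝ} {v V : (Fin d → ℝ) → (Fin d → ℝ)}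
    (hb : ContDiff ℝ (⊤ : ℕ∞) b) (hv : ∀ j, ContDiff ℝ (⊤ : ℕ∞) (fun y => v y j))
    (hV : ∀ j, ContDiff ℝ (⊤ : ℕ∞) (fun y => V y j)) (i : Fin d) (x : Fin d → ℝ) :
    pd (energyFlux μ b v V i) i x =
      (-1/2) * ((b x * b x + ∑ j, V x j * V x j) * pd (fun y => v y i) i x
        + (2 * (b x * pd b i x) + 2 * ∑ j, V x j * pd (fun y => V y j) i x) * v x i)
      - (b x * pd (fun y => V y i) i x + pd b i x * V x i)
      + μ * (∑ j, (V x j * pd (pd (fun y => V y j) i) i x + pd (fun y => V y j) i x ^ 2))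
      + (1 - μ) * (V x i * pd (dvg V) i x + pd (fun y => V y i) i x * dvg V x) := by
  have D : ∀ {f : (Fin d → ℝ) → ℝ}, ContDiff ℝ (⊤ : ℕ∞) f → DifferentiableAt ℝ f x :=
    fun hf => hf.contDiffAt.differentiableAt (by simp)
  have h1 := fun j => contDiff_pd (hV j) i
  have h2 := contDiff_dvg hV
  have h5 : ContDiff ℝ (⊤ : ℕ∞) fun x => ∑ j, V x j * V x j :=
    ContDiff.sum fun j _ => (hV j).mul (hV j)
  have h6 : ContDiff ℝ (⊤ : ℕ∞) fun x => ∑ j, V x j * pd (fun y => V y j) i x :=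
    ContDiff.sum fun j _ => (hV j).mul (h1 j)
  have e1 := ((hb.mul hb).add h5).mul (hv i)
  have e2 := hb.mul (hV i)
  have e4 := (hV i).mul h2
  have c1 := contDiff_const (c := (-1/2 : ℝ)) |>.mul e1
  have c2 := contDiff_const (c := (-1 : ℝ)) |>.mul e2
  have c3 := contDiff_const (c := μ) |>.mul h6
  have c4 := contDiff_const (c := 1 - μ) |>.mul e4
  unfold energyFlux
  rw [pd_add (D ((c1.add c2).add c3)) (D c4), pd_add (D (c1.add c2)) (D c3),
    pd_add (D c1) (D c2), pd_const_mul (D e1), pd_const_mul (D e2), pd_const_mul (D h6),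
    pd_const_mul (D e4), pd_mul (D ((hb.mul hb).add h5)) (D (hv i)), pd_mul (D hb) (D (hV i)),
    pd_mul (D (hV i)) (D h2), pd_add (D (hb.mul hb)) (D h5), pd_mul (D hb) (D hb),
    pd_sum (fun j => D ((hV j).mul (hV j))), pd_sum (fun j => D ((hV j).mul (h1 j)))]
  have s1 : ∑ j, pd (fun y => V y j * V y j) i x
      = 2 * ∑ j, V x j * pd (fun y => V y j) i x := by
    rw [Finset.mul_sum]
    refine Finset.sum_congr rfl fun j _ => ?_
    rw [pd_mul (D (hV j)) (D (hV j))]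
    ring
  have s2 : ∑ j, pd (fun y => V y j * pd (fun y => V y j) i y) i x
      = ∑ j, (V x j * pd (pd (fun y => V y j) i) i x + pd (fun y => V y j) i x ^ 2) := by
    refine Finset.sum_congr rfl fun j _ => ?_
    rw [pd_mul (D (hV j)) (D (h1 j))]
    ring
  rw [s1, s2]
  ring

/-- The pointwise energy balance with all derivatives replaced by independent real numbers: `b'` and
`V'` are time derivatives, `gb i = ∂ᵢb`, `gV i j = ∂ᵢVⱼ`, `hV i j = ∂ᵢ∂ᵢVⱼ`, `gD j = ∂ⱼ div V`,
`gv i = ∂ᵢvᵢ`. The final sum is the divergence of the energy flux. -/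
lemma energy_algebra (μ b b' R : ℝ) (v V V' h gb gv gD : Fin d → ℝ) (gV hV : Fin d → Fin d → ℝ)
    (h1 : b' + ∑ i, (b * gv i + gb i * v i) + ∑ i, gV i i = R)
    (h2 : ∀ j, V' j + (∑ k, v k * gV k j) + (-μ * (∑ i, hV i j) - (1 - μ) * gD j) + gb j = h j) :
    2 * b * b' + ∑ j, 2 * V j * V' j =
      2 * ((1/2) * (((∑ j, V j ^ 2) - b ^ 2) * ∑ i, gv i) + (R * b + ∑ j, h j * V j)
        - μ * (∑ i, ∑ j, gV i j ^ 2) - (1 - μ) * (∑ i, gV i i) ^ 2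
        + ∑ i, ((-1/2) * ((b * b + ∑ j, V j * V j) * gv i
            + (2 * (b * gb i) + 2 * ∑ j, V j * gV i j) * v i)
          - (b * gV i i + gb i * V i)
          + μ * (∑ j, (V j * hV i j + gV i j ^ 2))
          + (1 - μ) * (V i * gD i + gV i i * ∑ k, gV k k))) := by
  have e1 : b' = R - (b * ∑ i, gv i + ∑ i, gb i * v i) - ∑ i, gV i i := by
    rw [← h1, Finset.sum_add_distrib, Finset.mul_sum]; ring
  have e2 : ∑ j, 2 * V j * V' j = 2 * (∑ j, h j * V j) - 2 * (∑ i, (∑ j, V j * gV i j) * v i)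
      + 2 * μ * (∑ i, ∑ j, V j * hV i j) + 2 * (1 - μ) * (∑ j, V j * gD j)
      - 2 * ∑ j, gb j * V j := by
    have a1 : ∑ i, (∑ j, V j * gV i j) * v i = ∑ j, V j * ∑ k, v k * gV k j := by
      simp_rw [Finset.sum_mul, Finset.mul_sum]
      rw [Finset.sum_comm]
      exact Finset.sum_congr rfl fun j _ => Finset.sum_congr rfl fun i _ => by ring
    have a2 : ∑ i, ∑ j, V j * hV i j = ∑ j, V j * ∑ i, hV i j := by
      simp_rw [Finset.mul_sum]
      rw [Finset.sum_comm]
    rw [a1, a2]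
    simp_rw [Finset.mul_sum (s := Finset.univ) (f := fun j => h j * V j),
      Finset.mul_sum (s := Finset.univ) (f := fun j => V j * ∑ k, v k * gV k j),
      Finset.mul_sum (s := Finset.univ) (f := fun j => V j * ∑ i, hV i j),
      Finset.mul_sum (s := Finset.univ) (f := fun j => V j * gD j),
      Finset.mul_sum (s := Finset.univ) (f := fun j => gb j * V j)]
    rw [← Finset.sum_sub_distrib, ← Finset.sum_add_distrib, ← Finset.sum_add_distrib,
      ← Finset.sum_sub_distrib]
    refine Finset.sum_congr rfl fun j _ => ?_
    rw [← h2 j]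
    ring
  have e3 : ∑ i, ((-1/2) * ((b * b + ∑ j, V j * V j) * gv i
            + (2 * (b * gb i) + 2 * ∑ j, V j * gV i j) * v i)
          - (b * gV i i + gb i * V i)
          + μ * (∑ j, (V j * hV i j + gV i j ^ 2))
          + (1 - μ) * (V i * gD i + gV i i * ∑ k, gV k k))
      = (-1/2) * (b * b + ∑ j, V j * V j) * (∑ i, gv i) - b * (∑ i, gb i * v i)
        - (∑ i, (∑ j, V j * gV i j) * v i) - b * (∑ i, gV i i) - (∑ i, gb i * V i)
        + μ * (∑ i, ∑ j, V j * hV i j) + μ * (∑ i, ∑ j, gV i j ^ 2)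
        + (1 - μ) * (∑ j, V j * gD j) + (1 - μ) * (∑ k, gV k k) * (∑ i, gV i i) := by
    simp_rw [Finset.sum_add_distrib (s := Finset.univ) (f := fun j => V j * hV _ j)]
    generalize (b * b + ∑ j, V j * V j) = A
    generalize hD : (∑ k, gV k k) = D
    have key : ∀ P Q S : Fin d → ℝ,
        ∑ i, ((-1/2) * (A * gv i + (2 * (b * gb i) + 2 * P i) * v i)
          - (b * gV i i + gb i * V i) + μ * (Q i + S i) + (1 - μ) * (V i * gD i + gV i i * D))
        = (-1/2) * A * (∑ i, gv i) - b * (∑ i, gb i * v i)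
        - (∑ i, P i * v i) - b * (∑ i, gV i i) - (∑ i, gb i * V i)
        + μ * (∑ i, Q i) + μ * (∑ i, S i)
        + (1 - μ) * (∑ j, V j * gD j) + (1 - μ) * D * (∑ i, gV i i) := by
      intro P Q S
      simp_rw [Finset.mul_sum]
      simp_rw [← Finset.sum_sub_distrib, ← Finset.sum_add_distrib]
      exact Finset.sum_congr rfl fun i _ => by ring
    rw [key, hD]
  rw [e1, e2, e3]
  simp_rw [pow_two]
  ring

/-- The `L²` energy identity for the localized linearized
compressible Navier–Stokes system: if `∂ₜb + div(bu) + div U = R` and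
`∂ₜU + (u·∇)U + 𝒜U + ∇b = h`, then
`(1/2) d/dt ∫ (b² + |U|²) + μ∫|∇U|² + (1-μ)∫(div U)²
  = (1/2)∫(|U|² - b²) div u + ∫(Rb + h·U)`. -/
theorem statement12 (d : ℕ) (hd : 1 ≤ d) (μ T : ℝ) (hT : 0 < T)
    (b R : ℝ → (Fin d → ℝ) → ℝ) (u U h : ℝ → (Fin d → ℝ) → (Fin d → ℝ))
    (hb : ContDiffOn ℝ (⊤ : ℕ∞) (uncurry b) (Ioo (0:ℝ) T ×ˢ (univ : Set (Fin d → ℝ))))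
    (hR : ContDiffOn ℝ (⊤ : ℕ∞) (uncurry R) (Ioo (0:ℝ) T ×ˢ (univ : Set (Fin d → ℝ))))
    (hu : ContDiffOn ℝ (⊤ : ℕ∞) (uncurry u) (Ioo (0:ℝ) T ×ˢ (univ : Set (Fin d → ℝ))))
    (hU : ContDiffOn ℝ (⊤ : ℕ∞) (uncurry U) (Ioo (0:ℝ) T ×ˢ (univ : Set (Fin d → ℝ))))
    (hh : ContDiffOn ℝ (⊤ : ℕ∞) (uncurry h) (Ioo (0:ℝ) T ×ˢ (univ : Set (Fin d → ℝ))))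
    (hsupp : ∀ t₁ t₂ : ℝ, 0 < t₁ → t₂ < T → ∃ K : Set (Fin d → ℝ), IsCompact K ∧
      ∀ t ∈ Icc t₁ t₂, ∀ x, x ∉ K → b t x = 0 ∧ U t x = 0)
    (heq1 : ∀ t ∈ Ioo (0:ℝ) T, ∀ x,
      deriv (fun s => b s x) t + dvg (fun y => b t y • u t y) x + dvg (U t) x
        = R t x)
    (heq2 : ∀ t ∈ Ioo (0:ℝ) T, ∀ x j,
      deriv (fun s => U s x j) t + (∑ k, u t x k * pd (fun y => U t y j) k x)
        + lame μ (U t) x j + pd (b t) j x = h t x j) :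
    ∀ t ∈ Ioo (0:ℝ) T,
      HasDerivAt (fun s => ∫ x, ((b s x) ^ 2 + ∑ j, (U s x j) ^ 2))
        (2 * ((1/2 : ℝ) * (∫ x, ((∑ j, (U t x j) ^ 2) - (b t x) ^ 2) * dvg (u t) x)
          + (∫ x, (R t x * b t x + ∑ j, h t x j * U t x j))
          - μ * (∫ x, ∑ i, ∑ j, (pd (fun y => U t y j) i x) ^ 2)
          - (1 - μ) * ∫ x, (dvg (U t) x) ^ 2)) t := by
  intro t ht
  obtain ⟨K, hK, hz⟩ := hsupp (t / 2) ((t + T) / 2) (by linarith [ht.1]) (by linarith [ht.2])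
  have htI : t ∈ Icc (t / 2) ((t + T) / 2) := ⟨by linarith [ht.1], by linarith [ht.2]⟩
  have hUj : ∀ j, ContDiffOn ℝ (⊤ : ℕ∞) (uncurry fun s x => U s x j)
      (Ioo (0:ℝ) T ×ˢ (univ : Set (Fin d → ℝ))) := fun j => contDiffOn_pi.1 hU j
  have hF : ContDiffOn ℝ (⊤ : ℕ∞) (uncurry fun s x => (b s x) ^ 2 + ∑ j, (U s x j) ^ 2)
      (Ioo (0:ℝ) T ×ˢ (univ : Set (Fin d → ℝ))) :=
    (hb.pow 2).add (ContDiffOn.sum fun j _ => (hUj j).pow 2)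
  have hmain := hasDerivAt_integral_of_uniform_support hF (t := t) (t₁ := t / 2)
    (t₂ := (t + T) / 2) (by linarith [ht.1]) (by linarith [ht.1]) (by linarith [ht.2])
    (by linarith [ht.2]) hK (fun s hs x hx => by simp [hz s hs x hx])
  convert hmain using 1
  have cb : ContDiff ℝ (⊤ : ℕ∞) (b t) := contDiff_slice hb ht
  have cR : ContDiff ℝ (⊤ : ℕ∞) (R t) := contDiff_slice hR ht
  have cu : ∀ j, ContDiff ℝ (⊤ : ℕ∞) (fun y => u t y j) := contDiff_pi.1 (contDiff_slice hu ht)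
  have cU : ∀ j, ContDiff ℝ (⊤ : ℕ∞) (fun y => U t y j) := contDiff_pi.1 (contDiff_slice hU ht)
  have ch : ∀ j, ContDiff ℝ (⊤ : ℕ∞) (fun y => h t y j) := contDiff_pi.1 (contDiff_slice hh ht)
  have zb : ∀ x, x ∉ K → b t x = 0 := fun x hx => (hz t htI x hx).1
  have zU : ∀ j x, x ∉ K → U t x j = 0 := fun j x hx => by simp [(hz t htI x hx).2]
  have zpU : ∀ i j x, x ∉ K → pd (fun y => U t y j) i x = 0 :=
    fun i j => pd_eq_zero_off hK (zU j) i
  have zdU : ∀ x, x ∉ K → dvg (U t) x = 0 := fun x hx =>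
    Finset.sum_eq_zero fun i _ => zpU i i x hx
  have hpt : ∀ x, deriv (fun s => (b s x) ^ 2 + ∑ j, (U s x j) ^ 2) t =
      2 * ((1/2) * (((∑ j, (U t x j) ^ 2) - (b t x) ^ 2) * dvg (u t) x)
        + (R t x * b t x + ∑ j, h t x j * U t x j)
        - μ * (∑ i, ∑ j, (pd (fun y => U t y j) i x) ^ 2) - (1 - μ) * (dvg (U t) x) ^ 2
        + ∑ i, pd (energyFlux μ (b t) (u t) (U t) i) i x) := by
    intro x
    have db : HasDerivAt (fun s => b s x) (deriv (fun s => b s x) t) t :=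
      (hasDerivAt_slice hb ht x).differentiableAt.hasDerivAt
    have dU : ∀ j, HasDerivAt (fun s => U s x j) (deriv (fun s => U s x j) t) t :=
      fun j => (hasDerivAt_slice (hUj j) ht x).differentiableAt.hasDerivAt
    have dd : HasDerivAt (fun s => (b s x) ^ 2 + ∑ j, (U s x j) ^ 2)
        (2 * b t x * deriv (fun s => b s x) t
          + ∑ j, 2 * U t x j * deriv (fun s => U s x j) t) t := by
      refine HasDerivAt.add ?_ (HasDerivAt.fun_sum fun j _ => ?_)
      · simpa using db.fun_pow 2
      · simpa using (dU j).fun_pow 2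
    rw [dd.deriv]
    simp_rw [pd_energyFlux μ cb cu cU]
    refine energy_algebra μ (b t x) _ (R t x) (u t x) (U t x) _ (h t x) (fun i => pd (b t) i x)
      (fun i => pd (fun y => u t y i) i x) (fun i => pd (dvg (U t)) i x)
      (fun i j => pd (fun y => U t y j) i x) (fun i j => pd (pd (fun y => U t y j) i) i x) ?_ ?_
    · rw [← heq1 t ht x]
      congr 2
      refine Finset.sum_congr rfl fun i _ => ?_
      exact (pd_mul (cb.contDiffAt.differentiableAt (by simp))
        ((cu i).contDiffAt.differentiableAt (by simp)) i).symm
    · exact fun j => heq2 t ht x j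
  simp_rw [hpt]
  have cdu := (contDiff_dvg cu).continuous
  have cdU := (contDiff_dvg cU).continuous
  have cb' := cb.continuous
  have cR' := cR.continuous
  have cU' := fun j => (cU j).continuous
  have ch' := fun j => (ch j).continuous
  have cpU := fun i j => (contDiff_pd (cU j) i).continuous
  have i1 : Integrable fun x => ((∑ j, (U t x j) ^ 2) - (b t x) ^ 2) * dvg (u t) x :=
    integrable_of_eq_zero_off hK (by fun_prop) fun x hx => by simp [zb x hx, zU _ x hx]
  have i2 : Integrable fun x => R t x * b t x + ∑ j, h t x j * U t x j :=
    integrable_of_eq_zero_off hK (by fun_prop) fun x hx => by simp [zb x hx, zU _ x hx]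
  have i3 : Integrable fun x => ∑ i, ∑ j, (pd (fun y => U t y j) i x) ^ 2 :=
    integrable_of_eq_zero_off hK (by fun_prop) fun x hx => by simp [zpU _ _ x hx]
  have i4 : Integrable fun x => (dvg (U t) x) ^ 2 :=
    integrable_of_eq_zero_off hK (by fun_prop) fun x hx => by simp [zdU x hx]
  have cW := fun i => contDiff_energyFlux μ cb cu cU i
  have zW : ∀ i x, x ∉ K → energyFlux μ (b t) (u t) (U t) i x = 0 := fun i x hx => by
    simp [energyFlux, zb x hx, zU _ x hx]
  have i5 : ∀ i, Integrable fun x => pd (energyFlux μ (b t) (u t) (U t) i) i x := fun i =>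
    integrable_of_eq_zero_off hK (contDiff_pd (cW i) i).continuous (pd_eq_zero_off hK (zW i) i)
  have i5' := integrable_finsetSum Finset.univ fun i _ => i5 i
  have hW : ∫ x, ∑ i, pd (energyFlux μ (b t) (u t) (U t) i) i x = 0 := by
    rw [integral_finsetSum _ fun i _ => i5 i]
    exact Finset.sum_eq_zero fun i _ => integral_pd_eq_zero hK (cW i) (zW i) i
  have j2 : Integrable fun x => (1/2) * (((∑ j, (U t x j) ^ 2) - (b t x) ^ 2) * dvg (u t) x)
      + (R t x * b t x + ∑ j, h t x j * U t x j) := (i1.const_mul _).add i2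
  have j3 : Integrable fun x => (1/2) * (((∑ j, (U t x j) ^ 2) - (b t x) ^ 2) * dvg (u t) x)
      + (R t x * b t x + ∑ j, h t x j * U t x j)
      - μ * (∑ i, ∑ j, (pd (fun y => U t y j) i x) ^ 2) := j2.sub (i3.const_mul _)
  have j4 : Integrable fun x => (1/2) * (((∑ j, (U t x j) ^ 2) - (b t x) ^ 2) * dvg (u t) x)
      + (R t x * b t x + ∑ j, h t x j * U t x j)
      - μ * (∑ i, ∑ j, (pd (fun y => U t y j) i x) ^ 2) - (1 - μ) * (dvg (U t) x) ^ 2 :=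
    j3.sub (i4.const_mul _)
  rw [integral_const_mul, integral_add j4 i5', integral_sub j3 (i4.const_mul _),
    integral_sub j2 (i3.const_mul _), integral_add (i1.const_mul _) i2, integral_const_mul,
    integral_const_mul, integral_const_mul, hW, add_zero]
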